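/- arXiv:1608.01200 — 2 statements merged into one kernel-verified Lean document; each statement's English description precedes it below -/
import Mathlib

section
/- Let u be a minimizer of TV over BV_{⋄,1} = {v ∈ BV(ℝ²) : ∫_Ω v = 0, v ≡ 1 on Ω_s, v ≡ 0 outside Ω}. Then u ≤ 1 almost everywhere. -/
open MeasureTheory Real Set Filter

noncomputable section

abbrev E2 := EuclideanSpace ℝ (Fin 2)

/-- Divergence of a vector field on the plane. -/
def div2 (z : E2 → E2) (x : E2) : ℝ := ∑ i : Fin 2, fderiv ℝ z x (EuclideanSpace.single i 1) i

/-- The dual set defining the total variation. -/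
def tvSet (u : E2 → ℝ) : Set ℝ :=
  {y | ∃ z : E2 → E2, ContDiff ℝ (⊤ : ℕ∞) z ∧ HasCompactSupport z ∧ (∀ x, ‖z x‖ ≤ 1) ∧
        y = ∫ x, u x * div2 z x}

/-- Total variation of a function on ℝ². -/
def TV (u : E2 → ℝ) : ℝ := sSup (tvSet u)

/-- `u` has bounded variation. -/
def HasBV (u : E2 → ℝ) : Prop := BddAbove (tvSet u)

/-- Perimeter of a set. -/
def Per (A : Set E2) : ℝ := TV (A.indicator 1)

/-- `A` has finite perimeter. -/
def FinPer (A : Set E2) : Prop := HasBV (A.indicator 1)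

/-- Lebesgue measure as a real number. -/
def volR (A : Set E2) : ℝ := (volume A).toReal

/-- Cheeger constant of a domain `D`. -/
def cheegerConst (D : Set E2) : ℝ :=
  sInf {q : ℝ | ∃ A : Set E2, MeasurableSet A ∧ FinPer A ∧ A ⊆ D ∧ 0 < volR A ∧ q = Per A / volR A}

/-- `A` is a Cheeger set of `D`. -/
def IsCheegerSet (D A : Set E2) : Prop :=
  MeasurableSet A ∧ FinPer A ∧ A ⊆ D ∧ 0 < volR A ∧ Per A / volR A = cheegerConst D

/-- The admissible class `BV_{⋄,1}`. -/
def Admissible (Ω Ωs : Set E2) (v : E2 → ℝ) : Prop :=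
  Integrable v volume ∧ HasBV v ∧ (∫ x in Ω, v x) = 0 ∧
    (∀ x ∈ Ωs, v x = 1) ∧ ∀ x ∉ Ω, v x = 0

open scoped Convolution ContDiff
open ContinuousLinearMap

lemma div2_eq {z : E2 → E2} {x : E2} (hz : DifferentiableAt ℝ z x) :
    div2 z x = ∑ i : Fin 2, fderiv ℝ (fun y => z y i) x (EuclideanSpace.single i 1) := by
  unfold div2
  refine Finset.sum_congr rfl fun i _ => ?_
  have h := ((EuclideanSpace.proj i : E2 →L[ℝ] ℝ).hasFDerivAt (x := z x)).comp x hz.hasFDerivAt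
  have h2 : fderiv ℝ (fun y => z y i) x = (EuclideanSpace.proj i : E2 →L[ℝ] ℝ).comp (fderiv ℝ z x) := h.fderiv
  rw [h2]; rfl

lemma div2_cont {z : E2 → E2} (hz : ContDiff ℝ 1 z) : Continuous (div2 z) := by
  have := hz.continuous_fderiv one_ne_zero
  unfold div2
  fun_prop

lemma div2_supp {z : E2 → E2} (hc : HasCompactSupport z) : HasCompactSupport (div2 z) := by
  refine (hc.fderiv ℝ).mono ?_
  intro x hx
  simp only [Function.mem_support] at hx ⊢
  contrapose! hx
  simp [div2, hx]

lemma ibp {V : E2 → ℝ} {z : E2 → E2} (hV : ContDiff ℝ 1 V) (hz : ContDiff ℝ 1 z)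
    (hc : HasCompactSupport z) : ∫ x, V x * div2 z x = - ∫ x, fderiv ℝ V x (z x) := by
  have hzi : ∀ i, ContDiff ℝ 1 (fun y => z y i) := fun i => by fun_prop
  have hci : ∀ i, HasCompactSupport (fun y => z y i) := fun i =>
    hc.comp_left (g := fun v : E2 => v i) rfl
  have hVc := hV.continuous_fderiv one_ne_zero
  have hzc := fun i => (hzi i).continuous_fderiv one_ne_zero
  have i1 : ∀ i, Integrable (fun x => V x * fderiv ℝ (fun y => z y i) x (EuclideanSpace.single i 1)) := by
    intro i
    refine Continuous.integrable_of_hasCompactSupport ?_ ?_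
    · exact hV.continuous.mul ((hzc i).clm_apply continuous_const)
    · exact ((hci i).fderiv_apply ℝ _).mul_left
  have i2 : ∀ i, Integrable (fun x => fderiv ℝ V x (EuclideanSpace.single i 1) * z x i) := by
    intro i
    refine Continuous.integrable_of_hasCompactSupport ?_ ?_
    · exact (hVc.clm_apply continuous_const).mul (hzi i).continuous
    · exact (hci i).mul_left
  have i3 : ∀ i, Integrable (fun x => V x * z x i) := by
    intro i
    refine Continuous.integrable_of_hasCompactSupport ?_ ?_
    · exact hV.continuous.mul (hzi i).continuous
    · exact (hci i).mul_left
  have e1 : ∀ x, V x * div2 z x = ∑ i, V x * fderiv ℝ (fun y => z y i) x (EuclideanSpace.single i 1) := by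
    intro x
    rw [div2_eq (hz.differentiable one_ne_zero x), Finset.mul_sum]
  have e2 : ∀ x, fderiv ℝ V x (z x) = ∑ i, fderiv ℝ V x (EuclideanSpace.single i 1) * z x i := by
    intro x
    conv_lhs => rw [← (EuclideanSpace.basisFun (Fin 2) ℝ).sum_repr (z x)]
    simp [mul_comm]
  simp_rw [e1, e2]
  rw [integral_finsetSum _ (fun i _ => i1 i), integral_finsetSum _ (fun i _ => i2 i),
    ← Finset.sum_neg_distrib]
  refine Finset.sum_congr rfl fun i _ => ?_
  exact integral_mul_fderiv_eq_neg_fderiv_mul_of_integrable (i2 i) (i1 i) (i3 i)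
    (fun x _ => hV.differentiable one_ne_zero x) (fun x _ => (hzi i).differentiable one_ne_zero x)

lemma rho_cd (φ : ContDiffBump (0 : E2)) : ContDiff ℝ (⊤ : ℕ∞) (φ.normed volume) := φ.contDiff_normed

lemma conv_adj (φ : ContDiffBump (0 : E2)) {u ψ : E2 → ℝ} (hu : Integrable u) (hψ : Continuous ψ)
    (hc : HasCompactSupport ψ) :
    ∫ x, (φ.normed volume ⋆[lsmul ℝ ℝ, volume] u) x * ψ x =
      ∫ y, u y * (φ.normed volume ⋆[lsmul ℝ ℝ, volume] ψ) y := by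
  set ρ := φ.normed volume with hρ
  have hρi : Integrable ρ := φ.integrable_normed
  have h1 := (hu.convolution_integrand (L := lsmul ℝ ℝ) hρi)
  obtain ⟨C, hC⟩ := hψ.bounded_above_of_compact_support hc
  have h2 : Integrable (fun p : E2 × E2 => ψ p.1 * (u p.2 * ρ (p.1 - p.2))) (volume.prod volume) := by
    refine h1.bdd_mul (c := C) ?_ (ae_of_all _ fun p => hC p.1)
    exact (hψ.comp continuous_fst).aestronglyMeasurable
  have h3 := integral_integral_swap (f := fun x y => ψ x * (u y * ρ (x - y))) h2
  convert h3 using 1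
  · congr 1; ext x
    rw [convolution_eq_swap, ← integral_mul_const]
    congr 1; ext y
    simp [mul_comm]
  · congr 1; ext y
    rw [convolution_eq_swap, ← integral_const_mul]
    congr 1; ext x
    have : ρ (x - y) = ρ (y - x) := by rw [← neg_sub, hρ, φ.normed_neg]
    simp [this]; ring

lemma conv_div (φ : ContDiffBump (0 : E2)) {ζ : E2 → E2} (hz : ContDiff ℝ 1 ζ)
    (hc : HasCompactSupport ζ) (x : E2) :
    div2 (φ.normed volume ⋆[lsmul ℝ ℝ, volume] ζ) x =
      (φ.normed volume ⋆[lsmul ℝ ℝ, volume] (div2 ζ)) x := by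
  have hl : LocallyIntegrable (φ.normed volume) (volume : Measure E2) := φ.integrable_normed.locallyIntegrable
  have h := hc.hasFDerivAt_convolution_right (lsmul ℝ ℝ) hl hz x
  have hcd := hz.continuous_fderiv one_ne_zero
  unfold div2
  rw [h.fderiv]
  have hex : ∀ i : Fin 2, Integrable (fun t => φ.normed volume t *
      (fderiv ℝ ζ (x - t) (EuclideanSpace.single i 1) i)) := by
    intro i
    refine Continuous.integrable_of_hasCompactSupport ?_ ?_
    · exact φ.continuous_normed.mul (by fun_prop)
    · exact φ.hasCompactSupport_normed.mul_right
  have hex2 : ∀ i : Fin 2, Integrable (fun t => φ.normed volume t •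
      (fderiv ℝ ζ (x - t) (EuclideanSpace.single i 1))) := by
    intro i
    refine Continuous.integrable_of_hasCompactSupport ?_ ?_
    · exact φ.continuous_normed.smul (by fun_prop)
    · exact φ.hasCompactSupport_normed.smul_right
  simp_rw [convolution_precompR_apply _ hl (hc.fderiv ℝ) hcd, convolution_def, lsmul_apply,
    smul_eq_mul, Finset.mul_sum]
  rw [integral_finsetSum _ (fun i _ => hex i)]
  refine Finset.sum_congr rfl fun i _ => ?_
  exact ((EuclideanSpace.proj i : E2 →L[ℝ] ℝ).integral_comp_comm (hex2 i)).symm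

lemma conv_norm (φ : ContDiffBump (0 : E2)) {ζ : E2 → E2} (hz : Continuous ζ)
    (h : ∀ x, ‖ζ x‖ ≤ 1) (x : E2) : ‖(φ.normed volume ⋆[lsmul ℝ ℝ, volume] ζ) x‖ ≤ 1 := by
  have := dist_convolution_le (μ := (volume : Measure E2)) (x₀ := x) (z₀ := (0 : E2)) (g := ζ) zero_le_one
    φ.support_normed_eq.subset φ.nonneg_normed φ.integral_normed hz.aestronglyMeasurable
    (fun y _ => by simpa using h y)
  simpa using this

/-- Mollification does not increase the variation. -/
lemma moll_tv (φ : ContDiffBump (0 : E2)) {u : E2 → ℝ} (hu : Integrable u) (hb : HasBV u)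
    {ζ : E2 → E2} (hz : ContDiff ℝ (⊤ : ℕ∞) ζ) (hc : HasCompactSupport ζ) (h : ∀ x, ‖ζ x‖ ≤ 1) :
    ∫ x, (φ.normed volume ⋆[lsmul ℝ ℝ, volume] u) x * div2 ζ x ≤ TV u := by
  have hz1 : ContDiff ℝ 1 ζ := hz.of_le (by exact_mod_cast le_top)
  rw [conv_adj φ hu (div2_cont hz1) (div2_supp hc)]
  refine le_csSup hb ⟨φ.normed volume ⋆[lsmul ℝ ℝ, volume] ζ, ?_, ?_, ?_, ?_⟩
  · exact hc.contDiff_convolution_right _ φ.integrable_normed.locallyIntegrable hz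
  · exact HasCompactSupport.convolution _ φ.hasCompactSupport_normed hc
  · exact conv_norm φ hz.continuous h
  · simp_rw [conv_div φ hz1 hc]

lemma chain_fd {U : E2 → ℝ} {F F' : ℝ → ℝ} (hU : ContDiff ℝ 1 U)
    (hF : ∀ t, HasDerivAt F (F' t) t) (x v : E2) :
    fderiv ℝ (fun y => F (U y)) x v = F' (U x) * fderiv ℝ U x v := by
  have h := (hF (U x)).comp_hasFDerivAt x (hU.differentiable one_ne_zero x).hasFDerivAt
  have h2 : fderiv ℝ (fun y => F (U y)) x = F' (U x) • fderiv ℝ U x := h.fderiv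
  rw [h2]; simp

lemma cd1_of {F F' : ℝ → ℝ} (hF : ∀ t, HasDerivAt F (F' t) t) (hc : Continuous F') :
    ContDiff ℝ 1 F := by
  rw [contDiff_one_iff_deriv]
  refine ⟨fun t => (hF t).differentiableAt, ?_⟩
  have : deriv F = F' := funext fun t => (hF t).deriv
  rwa [this]

/-- The additivity inequality for smooth functions. -/
lemma smooth_split {U : E2 → ℝ} {F G F' G' : ℝ → ℝ} (hU : ContDiff ℝ (⊤ : ℕ∞) U)
    (hF : ∀ t, HasDerivAt F (F' t) t) (hG : ∀ t, HasDerivAt G (G' t) t)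
    (cF : ContDiff ℝ (⊤ : ℕ∞) F') (cG : ContDiff ℝ (⊤ : ℕ∞) G')
    (pF : ∀ t, 0 ≤ F' t) (pG : ∀ t, 0 ≤ G' t) (hFG : ∀ t, F' t + G' t = 1)
    {z w : E2 → E2} (hz : ContDiff ℝ (⊤ : ℕ∞) z) (hzc : HasCompactSupport z) (hz1 : ∀ x, ‖z x‖ ≤ 1)
    (hw : ContDiff ℝ (⊤ : ℕ∞) w) (hwc : HasCompactSupport w) (hw1 : ∀ x, ‖w x‖ ≤ 1) :
    ∃ ζ : E2 → E2, ContDiff ℝ (⊤ : ℕ∞) ζ ∧ HasCompactSupport ζ ∧ (∀ x, ‖ζ x‖ ≤ 1) ∧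
      (∫ x, F (U x) * div2 z x) + (∫ x, G (U x) * div2 w x) = ∫ x, U x * div2 ζ x := by
  have le1 : (1 : WithTop ℕ∞) ≤ ((⊤ : ℕ∞) : WithTop ℕ∞) := by exact_mod_cast le_top
  have hU1 := hU.of_le le1
  have cF1 := cd1_of hF cF.continuous
  have cG1 := cd1_of hG cG.continuous
  have hζ : ContDiff ℝ (⊤ : ℕ∞) (fun x => F' (U x) • z x + G' (U x) • w x) :=
    ((cF.comp hU).smul hz).add ((cG.comp hU).smul hw)
  have hζc : HasCompactSupport (fun x => F' (U x) • z x + G' (U x) • w x) :=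
    (hzc.smul_left (f := fun x => F' (U x))).add (hwc.smul_left (f := fun x => G' (U x)))
  refine ⟨fun x => F' (U x) • z x + G' (U x) • w x, hζ, hζc, ?_, ?_⟩
  · intro x
    calc ‖F' (U x) • z x + G' (U x) • w x‖ ≤ F' (U x) * ‖z x‖ + G' (U x) * ‖w x‖ := by
          refine (norm_add_le _ _).trans_eq ?_
          rw [norm_smul, norm_smul, Real.norm_of_nonneg (pF _), Real.norm_of_nonneg (pG _)]
      _ ≤ F' (U x) * 1 + G' (U x) * 1 := by
          gcongr
          · exact pF _
          · exact hz1 x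
          · exact pG _
          · exact hw1 x
      _ = 1 := by rw [mul_one, mul_one, hFG]
  · have hUc := hU1.continuous_fderiv one_ne_zero
    rw [ibp (V := fun x => F (U x)) (cF1.comp hU1) (hz.of_le le1) hzc,
      ibp (V := fun x => G (U x)) (cG1.comp hU1) (hw.of_le le1) hwc,
      ibp hU1 (hζ.of_le le1) hζc]
    simp_rw [chain_fd hU1 hF, chain_fd hU1 hG, map_add, map_smul, smul_eq_mul]
    rw [integral_add]
    · ring
    · refine Continuous.integrable_of_hasCompactSupport ?_ ?_
      · exact (cF.continuous.comp hU.continuous).mul (hUc.clm_apply hz.continuous)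
      · refine hzc.mono fun x hx => ?_
        simp only [Function.mem_support] at hx ⊢
        contrapose! hx; simp [hx]
    · refine Continuous.integrable_of_hasCompactSupport ?_ ?_
      · exact (cG.continuous.comp hU.continuous).mul (hUc.clm_apply hw.continuous)
      · refine hwc.mono fun x hx => ?_
        simp only [Function.mem_support] at hx ⊢
        contrapose! hx; simp [hx]

lemma lip_of {F F' : ℝ → ℝ} (hF : ∀ t, HasDerivAt F (F' t) t) (pF : ∀ t, 0 ≤ F' t)
    (qF : ∀ t, F' t ≤ 1) (a b : ℝ) : |F a - F b| ≤ |a - b| := by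
  have := Convex.norm_image_sub_le_of_norm_hasDerivWithin_le (f := F) (f' := F') (s := univ) (C := 1)
    (x := b) (y := a)
    (fun x _ => (hF x).hasDerivWithinAt)
    (fun x _ => by rw [Real.norm_of_nonneg (pF x)]; exact qF x) convex_univ trivial trivial
  simpa using this

lemma conv_abs_int (φ : ContDiffBump (0 : E2)) {v : E2 → ℝ} (hv : Integrable v) :
    ∫ x, |(φ.normed volume ⋆[lsmul ℝ ℝ, volume] v) x| ≤ ∫ x, |v x| := by
  have hi : Integrable (φ.normed volume) (volume : Measure E2) := φ.integrable_normed
  have h1 : ∫ x, (φ.normed volume ⋆[lsmul ℝ ℝ, volume] (fun y => |v y|)) x = ∫ x, |v x| := by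
    rw [integral_convolution _ hi hv.abs, φ.integral_normed]; simp
  rw [← h1]
  refine integral_mono (hi.integrable_convolution _ hv).abs (hi.integrable_convolution _ hv.abs) ?_
  intro x
  simp only [convolution_def, lsmul_apply, smul_eq_mul]
  refine abs_integral_le_integral_abs.trans_eq ?_
  congr 1; ext t
  rw [abs_mul, abs_of_nonneg (φ.nonneg_normed t)]

set_option maxHeartbeats 1000000 in
lemma moll_approx {u D : E2 → ℝ} (hu : Integrable u) (hD : Continuous D) (hDc : HasCompactSupport D)
    (hD0 : ∀ x, 0 ≤ D x) {ε : ℝ} (hε : 0 < ε) :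
    ∃ φ : ContDiffBump (0 : E2),
      ∫ x, |(φ.normed volume ⋆[lsmul ℝ ℝ, volume] u) x - u x| * D x ≤ ε := by
  obtain ⟨C, hC⟩ := hD.bounded_above_of_compact_support hDc
  have hDi : Integrable D := hD.integrable_of_hasCompactSupport hDc
  have hC0 : 0 ≤ C := (norm_nonneg _).trans (hC 0)
  have hI0 : 0 ≤ ∫ x, D x := integral_nonneg hD0
  set M := C + (∫ x, D x) + C + 1 with hM
  have hM0 : 0 < M := by positivity
  set δ := ε / M with hδ
  have hδ0 : 0 < δ := by positivity
  obtain ⟨w, hwc, hw, hwcont, hwi⟩ := hu.exists_hasCompactSupport_integral_sub_le hδ0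
  have huc := hwc.uniformContinuous_of_continuous hwcont
  obtain ⟨r, hr, hwr⟩ := Metric.uniformContinuous_iff.1 huc δ hδ0
  refine ⟨⟨r / 2, r, by positivity, by linarith⟩, ?_⟩
  set φ : ContDiffBump (0 : E2) := ⟨r / 2, r, by positivity, by linarith⟩ with hφ
  have hi : Integrable (φ.normed volume) (volume : Measure E2) := φ.integrable_normed
  have huw : Integrable (fun x => u x - w x) := hu.sub hwi
  have hab := conv_abs_int φ huw
  have hsub : ∀ x, (φ.normed volume ⋆[lsmul ℝ ℝ, volume] (fun x => u x - w x)) x =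
      (φ.normed volume ⋆[lsmul ℝ ℝ, volume] u) x - (φ.normed volume ⋆[lsmul ℝ ℝ, volume] w) x := by
    intro x
    have e1 : ConvolutionExistsAt (φ.normed volume) u x (lsmul ℝ ℝ) volume :=
      HasCompactSupport.convolutionExists_left _ φ.hasCompactSupport_normed φ.continuous_normed hu.locallyIntegrable x
    have e2 : ConvolutionExistsAt (φ.normed volume) w x (lsmul ℝ ℝ) volume :=
      HasCompactSupport.convolutionExists_left _ φ.hasCompactSupport_normed φ.continuous_normed hwi.locallyIntegrable x
    simp only [convolution_def]
    rw [← integral_sub e1.integrable e2.integrable]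
    simp [mul_sub]
  have hww : ∀ x, |(φ.normed volume ⋆[lsmul ℝ ℝ, volume] w) x - w x| ≤ δ := by
    intro x
    have := φ.dist_normed_convolution_le (μ := volume) (g := w) (x₀ := x) (ε := δ) hwcont.aestronglyMeasurable
      (fun y hy => (hwr hy).le)
    simpa [Real.dist_eq] using this
  have J1 : Integrable (fun x => C * |(φ.normed volume ⋆[lsmul ℝ ℝ, volume] (fun x => u x - w x)) x|) :=
    (hi.integrable_convolution _ huw).abs.const_mul C
  have J2 : Integrable (fun x => δ * D x) := hDi.const_mul δ
  have J12 : Integrable (fun x => C * |(φ.normed volume ⋆[lsmul ℝ ℝ, volume] (fun x => u x - w x)) x| + δ * D x) :=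
    J1.add J2
  have J3 : Integrable (fun x => C * |u x - w x|) := huw.abs.const_mul C
  have hw' : ∫ x, |u x - w x| ≤ δ := hw
  have J4 : Integrable (fun x => |(φ.normed volume ⋆[lsmul ℝ ℝ, volume] u) x - u x| * D x) :=
    ((hi.integrable_convolution _ hu).sub hu).abs.mul_bdd (c := C) hD.aestronglyMeasurable
      (ae_of_all _ hC)
  calc ∫ x, |(φ.normed volume ⋆[lsmul ℝ ℝ, volume] u) x - u x| * D x
      ≤ ∫ x, (C * |(φ.normed volume ⋆[lsmul ℝ ℝ, volume] (fun x => u x - w x)) x| + δ * D x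
          + C * |u x - w x|) := by
        refine integral_mono J4 ((J1.add J2).add J3) fun x => ?_
        have hDC : D x ≤ C := (le_abs_self _).trans (hC x)
        have h3 : |(φ.normed volume ⋆[lsmul ℝ ℝ, volume] u) x - u x| ≤
            |(φ.normed volume ⋆[lsmul ℝ ℝ, volume] (fun x => u x - w x)) x| + δ + |u x - w x| := by
          rw [hsub]
          have a1 := abs_le.1 (hww x)
          have a2 := abs_le.1 (le_refl |u x - w x|)
          have a3 := abs_le.1 (le_refl |(φ.normed volume ⋆[lsmul ℝ ℝ, volume] u) x - (φ.normed volume ⋆[lsmul ℝ ℝ, volume] w) x|)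
          rw [abs_le]; constructor <;> linarith [a1.1, a1.2, a2.1, a2.2, a3.1, a3.2]
        have := mul_le_mul_of_nonneg_right h3 (hD0 x)
        have b1 := mul_le_mul_of_nonneg_left hDC (abs_nonneg ((φ.normed volume ⋆[lsmul ℝ ℝ, volume] (fun x => u x - w x)) x))
        have b2 := mul_le_mul_of_nonneg_left hDC (abs_nonneg (u x - w x))
        simp only
        linarith
    _ = C * (∫ x, |(φ.normed volume ⋆[lsmul ℝ ℝ, volume] (fun x => u x - w x)) x|) + δ * (∫ x, D x)
          + C * ∫ x, |u x - w x| := by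
        rw [integral_add J12 J3, integral_add J1 J2, integral_const_mul, integral_const_mul,
          integral_const_mul]
    _ ≤ C * δ + δ * (∫ x, D x) + C * δ := by
        gcongr
        exact hab.trans hw'
    _ ≤ δ * M := by rw [hM]; nlinarith
    _ = ε := by rw [hδ]; field_simp

set_option maxHeartbeats 1000000 in
/-- Additivity inequality (a weak form of the coarea formula). -/
lemma tv_split {u : E2 → ℝ} {F G F' G' : ℝ → ℝ} (hu : Integrable u) (hb : HasBV u)
    (hF : ∀ t, HasDerivAt F (F' t) t) (hG : ∀ t, HasDerivAt G (G' t) t)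
    (cF : ContDiff ℝ (⊤ : ℕ∞) F') (cG : ContDiff ℝ (⊤ : ℕ∞) G')
    (pF : ∀ t, 0 ≤ F' t) (pG : ∀ t, 0 ≤ G' t) (hFG : ∀ t, F' t + G' t = 1)
    (F0 : F 0 = 0) (G0 : G 0 = 0)
    {z w : E2 → E2} (hz : ContDiff ℝ (⊤ : ℕ∞) z) (hzc : HasCompactSupport z) (hz1 : ∀ x, ‖z x‖ ≤ 1)
    (hw : ContDiff ℝ (⊤ : ℕ∞) w) (hwc : HasCompactSupport w) (hw1 : ∀ x, ‖w x‖ ≤ 1) :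
    (∫ x, F (u x) * div2 z x) + (∫ x, G (u x) * div2 w x) ≤ TV u := by
  have le1 : (1 : WithTop ℕ∞) ≤ ((⊤ : ℕ∞) : WithTop ℕ∞) := by exact_mod_cast le_top
  refine le_of_forall_pos_le_add fun ε hε => ?_
  have cz := div2_cont (hz.of_le le1)
  have cw := div2_cont (hw.of_le le1)
  have sz := div2_supp hzc
  have sw := div2_supp hwc
  have sz' : HasCompactSupport (fun x => |div2 z x|) := sz.comp_left (g := fun t : ℝ => |t|) abs_zero
  have sw' : HasCompactSupport (fun x => |div2 w x|) := sw.comp_left (g := fun t : ℝ => |t|) abs_zero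
  obtain ⟨φ, hφ⟩ := moll_approx (D := fun x => |div2 z x| + |div2 w x|) hu (by fun_prop)
    (sz'.add sw') (fun x => by positivity) hε
  have hi : Integrable (φ.normed volume) (volume : Measure E2) := φ.integrable_normed
  set U := (φ.normed volume ⋆[lsmul ℝ ℝ, volume] u) with hUdef
  have hUi : Integrable U := hi.integrable_convolution _ hu
  have hU : ContDiff ℝ (⊤ : ℕ∞) U :=
    HasCompactSupport.contDiff_convolution_left _ φ.hasCompactSupport_normed (rho_cd φ) hu.locallyIntegrable
  obtain ⟨ζ, h1, h2, h3, h4⟩ := smooth_split hU hF hG cF cG pF pG hFG hz hzc hz1 hw hwc hw1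
  have h5 := moll_tv φ hu hb h1 h2 h3
  rw [← hUdef, ← h4] at h5
  have lF := lip_of hF pF (fun t => by linarith [hFG t, pG t])
  have lG := lip_of hG pG (fun t => by linarith [hFG t, pF t])
  have contF : Continuous F := continuous_iff_continuousAt.2 fun t => (hF t).continuousAt
  have contG : Continuous G := continuous_iff_continuousAt.2 fun t => (hG t).continuousAt
  have key : ∀ {H : ℝ → ℝ} {v : E2 → ℝ} {d : E2 → ℝ}, Continuous H → H 0 = 0 →
      (∀ a b, |H a - H b| ≤ |a - b|) → Integrable v → Continuous d → HasCompactSupport d →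
      Integrable (fun x => H (v x) * d x) := by
    intro H v d cH H0 lH hv hd hdc
    obtain ⟨C, hC⟩ := hd.bounded_above_of_compact_support hdc
    refine Integrable.mul_bdd (c := C) ?_ hd.aestronglyMeasurable (ae_of_all _ hC)
    refine hv.mono (cH.comp_aestronglyMeasurable hv.1) (ae_of_all _ fun x => ?_)
    have := lH (v x) 0
    simpa [H0] using this
  have k1 := key contF F0 lF hu cz sz
  have k2 := key contG G0 lG hu cw sw
  have k3 := key contF F0 lF hUi cz sz
  have k4 := key contG G0 lG hUi cw sw
  have k34 : Integrable (fun x => F (U x) * div2 z x + G (U x) * div2 w x) := k3.add k4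
  have kz : Integrable (fun x => |U x - u x| * (|div2 z x| + |div2 w x|)) := by
    have hs : Integrable (fun x => U x - u x) := hUi.sub hu
    have a1 := key (H := fun t => |t|) (v := fun x => U x - u x) (d := fun x => |div2 z x|)
      continuous_abs abs_zero (fun a b => abs_abs_sub_abs_le a b) hs cz.abs sz'
    have a2 := key (H := fun t => |t|) (v := fun x => U x - u x) (d := fun x => |div2 w x|)
      continuous_abs abs_zero (fun a b => abs_abs_sub_abs_le a b) hs cw.abs sw'
    refine (a1.add a2).congr (ae_of_all _ fun x => ?_)
    simp only [Pi.add_apply]; ring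
  have h6 : (∫ x, F (u x) * div2 z x) + (∫ x, G (u x) * div2 w x) ≤
      ((∫ x, F (U x) * div2 z x) + (∫ x, G (U x) * div2 w x))
        + ∫ x, |U x - u x| * (|div2 z x| + |div2 w x|) := by
    rw [← integral_add k1 k2, ← integral_add k3 k4, ← integral_add k34 kz]
    refine integral_mono (k1.add k2) ((k3.add k4).add kz) fun x => ?_
    have e1 : (F (u x) - F (U x)) * div2 z x ≤ |U x - u x| * |div2 z x| := by
      refine (le_abs_self _).trans ?_
      rw [abs_mul, abs_sub_comm (U x)]
      exact mul_le_mul_of_nonneg_right (lF _ _) (abs_nonneg _)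
    have e2 : (G (u x) - G (U x)) * div2 w x ≤ |U x - u x| * |div2 w x| := by
      refine (le_abs_self _).trans ?_
      rw [abs_mul, abs_sub_comm (U x)]
      exact mul_le_mul_of_nonneg_right (lG _ _) (abs_nonneg _)
    simp only [Pi.add_apply]
    linarith
  linarith
lemma int_deriv_zero {w : E2 → ℝ}
    (h : ∀ z : E2 → E2, ContDiff ℝ (⊤ : ℕ∞) z → HasCompactSupport z → (∀ x, ‖z x‖ ≤ 1) →
      ∫ x, w x * div2 z x ≤ 0)
    {g : E2 → ℝ} (hg : ContDiff ℝ (⊤ : ℕ∞) g) (hgc : HasCompactSupport g) (i : Fin 2) :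
    ∫ x, w x * fderiv ℝ g x (EuclideanSpace.single i 1) = 0 := by
  obtain ⟨C, hC⟩ := hg.continuous.bounded_above_of_compact_support hgc
  have hC0 : 0 ≤ C := (norm_nonneg _).trans (hC 0)
  have le1 : (1 : WithTop ℕ∞) ≤ ((⊤ : ℕ∞) : WithTop ℕ∞) := by exact_mod_cast le_top
  have hd := (hg.of_le le1).differentiable one_ne_zero
  have main : ∀ c : ℝ, |c| * C ≤ 1 →
      c * ∫ x, w x * fderiv ℝ g x (EuclideanSpace.single i 1) ≤ 0 := by
    intro c hc
    have hzs : ContDiff ℝ (⊤ : ℕ∞) (fun x => (c * g x) • (EuclideanSpace.single i (1 : ℝ) : E2)) :=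
      (contDiff_const.mul hg).smul contDiff_const
    have hzc : HasCompactSupport (fun x => (c * g x) • (EuclideanSpace.single i (1 : ℝ) : E2)) := by
      refine hgc.mono fun x hx => ?_
      simp only [Function.mem_support] at hx ⊢
      contrapose! hx; simp [hx]
    have := h _ hzs hzc (fun x => by
      rw [norm_smul]
      simp only [EuclideanSpace.norm_single, norm_one, mul_one, norm_mul, Real.norm_eq_abs c]
      exact (mul_le_mul_of_nonneg_left (hC x) (abs_nonneg c)).trans hc)
    rw [← integral_const_mul]
    refine le_of_eq_of_le ?_ this
    congr 1; ext x
    have hfd : HasFDerivAt (fun x => (c * g x) • (EuclideanSpace.single i (1 : ℝ) : E2))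
        ((c • fderiv ℝ g x).smulRight (EuclideanSpace.single i (1 : ℝ) : E2)) x :=
      ((hd x).hasFDerivAt.const_mul c).smul_const _
    unfold div2
    rw [hfd.fderiv]
    rw [Finset.sum_eq_single i]
    · simp; ring
    · intro j _ hj
      simp [hj]
    · simp
  have hp : 0 < 1 / (C + 1) := by positivity
  have hle : |1 / (C + 1)| * C ≤ 1 := by
    rw [abs_of_pos hp, one_div_mul_eq_div, div_le_one (by positivity)]; linarith
  have m1 := main (1 / (C + 1)) hle
  have m2 := main (-(1 / (C + 1))) (by rwa [abs_neg])
  have : (1 / (C + 1)) * ∫ x, w x * fderiv ℝ g x (EuclideanSpace.single i 1) = 0 := by linarith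
  exact (mul_eq_zero.1 this).resolve_left hp.ne'

lemma zero_of_tv {w : E2 → ℝ} (hw : Integrable w) (hwc : HasCompactSupport w)
    (h : ∀ z : E2 → E2, ContDiff ℝ (⊤ : ℕ∞) z → HasCompactSupport z → (∀ x, ‖z x‖ ≤ 1) →
      ∫ x, w x * div2 z x ≤ 0) : ∀ᵐ x : E2, w x = 0 := by
  refine ae_eq_zero_of_integral_contDiff_smul_eq_zero hw.locallyIntegrable fun g hg hgc => ?_
  have le1 : (1 : WithTop ℕ∞) ≤ ((⊤ : ℕ∞) : WithTop ℕ∞) := by exact_mod_cast le_top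
  set φ : E2 → ℝ := fun x => g (-x) with hφ
  have cφ : ContDiff ℝ (⊤ : ℕ∞) φ := hg.comp contDiff_neg
  have sφ : HasCompactSupport φ := hgc.comp_homeomorph (Homeomorph.neg E2)
  have cφ1 := cφ.of_le le1
  have hd := cφ1.differentiable one_ne_zero
  set F := w ⋆[lsmul ℝ ℝ, volume] φ with hF
  have hFd : ∀ x, HasFDerivAt F (0 : E2 →L[ℝ] ℝ) x := by
    intro x
    have h1 := sφ.hasFDerivAt_convolution_right (lsmul ℝ ℝ) hw.locallyIntegrable cφ1 x
    have hb : ∀ i : Fin 2, (w ⋆[(lsmul ℝ ℝ).precompR E2, volume] fderiv ℝ φ) x (EuclideanSpace.single i 1) = 0 := by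
      intro i
      rw [convolution_precompR_apply _ hw.locallyIntegrable (sφ.fderiv ℝ) (cφ1.continuous_fderiv one_ne_zero),
        convolution_def]
      have hs : HasCompactSupport (fun t => φ (x - t)) := sφ.comp_homeomorph (Homeomorph.subLeft x)
      have h2 := int_deriv_zero h (g := fun t => φ (x - t)) (cφ.comp (contDiff_const.sub contDiff_id)) hs i
      have h3 : ∀ t, fderiv ℝ (fun t => φ (x - t)) t (EuclideanSpace.single i 1) =
          - fderiv ℝ φ (x - t) (EuclideanSpace.single i 1) := by
        intro t
        have hh : HasFDerivAt (fun t => φ (x - t)) ((fderiv ℝ φ (x - t)).comp (-(ContinuousLinearMap.id ℝ E2))) t :=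
          (hd (x - t)).hasFDerivAt.comp t ((hasFDerivAt_id t).const_sub x)
        rw [hh.fderiv]; simp
      simp_rw [h3, mul_neg, integral_neg, neg_eq_zero] at h2
      simpa using h2
    have hz : (w ⋆[(lsmul ℝ ℝ).precompR E2, volume] fderiv ℝ φ) x = 0 := by
      ext v
      rw [← (EuclideanSpace.basisFun (Fin 2) ℝ).sum_repr v]
      simp [hb]
    rw [hz] at h1
    exact h1
  have hconst : ∀ x y, F x = F y := fun x y =>
    is_const_of_fderiv_eq_zero (fun x => (hFd x).differentiableAt) (fun x => (hFd x).fderiv) x y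
  have hFc : HasCompactSupport F := HasCompactSupport.convolution _ hwc sφ
  have : ∃ y, F y = 0 := by
    by_contra! hne
    have : tsupport F = univ := by
      rw [tsupport, show Function.support F = univ from by ext x; simp [hne x], closure_univ]
    have hcu : IsCompact (univ : Set E2) := this ▸ hFc
    exact noncompact_univ E2 hcu
  obtain ⟨y, hy⟩ := this
  have h0 : F 0 = 0 := (hconst 0 y).trans hy
  rw [hF, convolution_def] at h0
  rw [← h0]
  congr 1; ext t
  simp [hφ, mul_comm]

/-- Smooth increasing function vanishing exactly on the nonpositive half line. -/
def hst (t : ℝ) : ℝ := ∫ s in (0 : ℝ)..t, Real.smoothTransition s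

lemma hst_deriv (t : ℝ) : HasDerivAt hst (Real.smoothTransition t) t :=
  intervalIntegral.integral_hasDerivAt_right
    (Real.smoothTransition.continuous.intervalIntegrable _ _)
    (Real.smoothTransition.continuous.stronglyMeasurableAtFilter _ _)
    Real.smoothTransition.continuousAt

lemma hst_nonpos {t : ℝ} (ht : t ≤ 0) : hst t = 0 := by
  unfold hst
  rw [intervalIntegral.integral_congr (g := fun _ => 0)]
  · simp
  · intro s hs
    rw [uIcc_of_ge ht] at hs
    exact Real.smoothTransition.zero_of_nonpos hs.2

lemma hst_pos {t : ℝ} (ht : 0 < t) : 0 < hst t :=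
  intervalIntegral.intervalIntegral_pos_of_pos_on
    (Real.smoothTransition.continuous.intervalIntegrable _ _)
    (fun _ hs => Real.smoothTransition.pos_of_pos hs.1) ht

lemma hst_nonneg (t : ℝ) : 0 ≤ hst t := by
  rcases le_or_gt t 0 with h | h
  · rw [hst_nonpos h]
  · exact (hst_pos h).le

lemma hst_cont : Continuous hst := continuous_iff_continuousAt.2 fun t => (hst_deriv t).continuousAt

lemma hst_lip (a b : ℝ) : |hst a - hst b| ≤ |a - b| :=
  lip_of hst_deriv Real.smoothTransition.nonneg Real.smoothTransition.le_one a b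

lemma TV_zero_field : div2 (0 : E2 → E2) = 0 := by
  ext x; simp [div2]

/-- minimizers of TV over `BV_{⋄,1}` are bounded above by 1. -/
theorem stmt4 (Ω Ωs : Set E2) (hΩo : IsOpen Ω) (hΩb : Bornology.IsBounded Ω)
    (hsub : Ωs ⊆ Ω) (hΩs : 0 < volume Ωs) (u : E2 → ℝ)
    (hu : Admissible Ω Ωs u) (hmin : ∀ v : E2 → ℝ, Admissible Ω Ωs v → TV u ≤ TV v) :
    ∀ᵐ x : E2 ∂volume, u x ≤ 1 := by
  obtain ⟨hui, hub, hu0, hu1, huz⟩ := hu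
  have hΩm := hΩo.measurableSet
  -- integrability of the two auxiliary compositions
  have i1 : Integrable (fun x => hst (u x - 1)) := by
    refine hui.mono (hst_cont.comp_aestronglyMeasurable (hui.1.sub aestronglyMeasurable_const))
      (ae_of_all _ fun x => ?_)
    rw [Real.norm_of_nonneg (hst_nonneg _), Real.norm_eq_abs]
    rcases le_or_gt (u x - 1) 0 with h | h
    · rw [hst_nonpos h]; positivity
    · have := hst_lip (u x - 1) 0
      rw [hst_nonpos le_rfl, sub_zero, sub_zero, abs_of_nonneg (hst_nonneg _), abs_of_pos h] at this
      linarith [le_abs_self (u x)]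
  have i2 : Integrable (fun x => hst (-u x)) := by
    refine hui.mono (hst_cont.comp_aestronglyMeasurable hui.1.neg) (ae_of_all _ fun x => ?_)
    have := hst_lip (-u x) 0
    simpa [hst_nonpos le_rfl] using this
  set I1 := ∫ x in Ω, hst (u x - 1) with hI1
  set I2 := ∫ x in Ω, hst (-u x) with hI2
  have p1 : 0 ≤ I1 := integral_nonneg fun x => hst_nonneg _
  have p2 : 0 ≤ I2 := integral_nonneg fun x => hst_nonneg _
  have fin : (∀ᵐ x ∂(volume.restrict Ω), u x ≤ 1) → ∀ᵐ x : E2 ∂volume, u x ≤ 1 := by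
    intro h
    rw [ae_restrict_iff' hΩm] at h
    filter_upwards [h] with x hx
    by_cases hxΩ : x ∈ Ω
    · exact hx hxΩ
    · rw [huz x hxΩ]; exact zero_le_one
  rcases p2.eq_or_lt with q2 | q2
  · -- then `u ≥ 0`, so `u = 0`
    apply fin
    have h1 := (integral_eq_zero_iff_of_nonneg (fun x => hst_nonneg _) i2.integrableOn).1 q2.symm
    have h2 : 0 ≤ᵐ[volume.restrict Ω] u := by
      filter_upwards [h1] with x hx
      by_contra hlt
      have : 0 < -u x := by simp only [Pi.zero_apply, not_le] at hlt; linarith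
      exact (hst_pos this).ne' hx
    have h3 := (integral_eq_zero_iff_of_nonneg_ae h2 hui.integrableOn).1 hu0
    filter_upwards [h3] with x hx
    rw [hx]; exact zero_le_one
  have hS : 0 < I1 + I2 := by linarith
  set a := I2 / (I1 + I2) with ha
  set b := I1 / (I1 + I2) with hb
  have a0 : 0 < a := by positivity
  have b0 : 0 ≤ b := by positivity
  have hab : a + b = 1 := by rw [ha, hb]; field_simp; ring
  have hab2 : a * I1 = b * I2 := by rw [ha, hb]; field_simp
  set G : ℝ → ℝ := fun t => a * hst (t - 1) - b * hst (-t) with hGdef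
  set F : ℝ → ℝ := fun t => t - G t with hFdef
  set G' : ℝ → ℝ := fun t => a * Real.smoothTransition (t - 1) + b * Real.smoothTransition (-t) with hG'
  set F' : ℝ → ℝ := fun t => 1 - G' t with hF'
  have dG : ∀ t, HasDerivAt G (G' t) t := by
    intro t
    have e1 : HasDerivAt (fun t => hst (t - 1)) (Real.smoothTransition (t - 1)) t := by
      have := (hst_deriv (t - 1)).comp t ((hasDerivAt_id t).sub_const 1)
      rw [mul_one] at this
      exact this
    have e2 : HasDerivAt (fun t => hst (-t)) (-Real.smoothTransition (-t)) t := by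
      have := (hst_deriv (-t)).comp t (hasDerivAt_neg t)
      rw [mul_neg_one] at this
      exact this
    have e3 := (e1.const_mul a).sub (e2.const_mul b)
    have e4 : a * Real.smoothTransition (t - 1) - b * -Real.smoothTransition (-t) = G' t := by
      simp only [hG']; ring
    rw [e4] at e3
    exact e3
  have dF : ∀ t, HasDerivAt F (F' t) t := fun t => (hasDerivAt_id t).sub (dG t)
  have cG : ContDiff ℝ (⊤ : ℕ∞) G' := by
    have hs : ContDiff ℝ (⊤ : ℕ∞) Real.smoothTransition := Real.smoothTransition.contDiff
    exact (contDiff_const.mul (hs.comp (contDiff_id.sub contDiff_const))).add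
      (contDiff_const.mul (hs.comp contDiff_neg))
  have cF : ContDiff ℝ (⊤ : ℕ∞) F' := contDiff_const.sub cG
  have pG : ∀ t, 0 ≤ G' t := fun t => add_nonneg
    (mul_nonneg a0.le (Real.smoothTransition.nonneg _)) (mul_nonneg b0 (Real.smoothTransition.nonneg _))
  have pF : ∀ t, 0 ≤ F' t := fun t => by
    have e1 := mul_le_mul_of_nonneg_left (Real.smoothTransition.le_one (t - 1)) a0.le
    have e2 := mul_le_mul_of_nonneg_left (Real.smoothTransition.le_one (-t)) b0
    simp only [hF', hG']; linarith
  have hFG : ∀ t, F' t + G' t = 1 := fun t => by simp only [hF']; ring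
  have G0 : G 0 = 0 := by simp [hGdef, hst_nonpos]
  have F0 : F 0 = 0 := by simp [hFdef, G0]
  have F1 : F 1 = 1 := by simp [hFdef, hGdef, hst_nonpos]
  have iG : Integrable (fun x => G (u x)) := (i1.const_mul a).sub (i2.const_mul b)
  have iF : Integrable (fun x => F (u x)) := hui.sub iG
  have split : ∀ z w : E2 → E2, ContDiff ℝ (⊤ : ℕ∞) z → HasCompactSupport z → (∀ x, ‖z x‖ ≤ 1) →
      ContDiff ℝ (⊤ : ℕ∞) w → HasCompactSupport w → (∀ x, ‖w x‖ ≤ 1) →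
      (∫ x, F (u x) * div2 z x) + (∫ x, G (u x) * div2 w x) ≤ TV u :=
    fun z w hz hzc hz1 hw hwc hw1 =>
      tv_split hui hub dF dG cF cG pF pG hFG F0 G0 hz hzc hz1 hw hwc hw1
  have zc : ContDiff ℝ (⊤ : ℕ∞) (0 : E2 → E2) := contDiff_const
  have zs : HasCompactSupport (0 : E2 → E2) := HasCompactSupport.zero
  have hbF : HasBV (fun x => F (u x)) := by
    refine ⟨TV u, ?_⟩
    rintro _ ⟨z, hz, hzc, hz1, rfl⟩
    simpa [TV_zero_field] using split z 0 hz hzc hz1 zc zs (by simp)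
  have intG : ∫ x in Ω, G (u x) = 0 := by
    have e : ∫ x in Ω, G (u x) = a * I1 - b * I2 := by
      rw [hI1, hI2, ← integral_const_mul, ← integral_const_mul]
      exact integral_sub (i1.const_mul a).integrableOn (i2.const_mul b).integrableOn
    rw [e, hab2, sub_self]
  have adm : Admissible Ω Ωs (fun x => F (u x)) := by
    refine ⟨iF, hbF, ?_, fun x hx => by simp only [hu1 x hx, F1], fun x hx => by simp only [huz x hx, F0]⟩
    have e : ∫ x in Ω, F (u x) = (∫ x in Ω, u x) - ∫ x in Ω, G (u x) :=
      integral_sub hui.integrableOn iG.integrableOn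
    rw [e, hu0, intG, sub_zero]
  have hle := hmin _ adm
  have hz0 : ∀ᵐ x : E2, G (u x) = 0 := by
    refine zero_of_tv iG ?_ ?_
    · refine HasCompactSupport.of_support_subset_isCompact hΩb.isCompact_closure fun x hx => ?_
      by_contra hxn
      exact hx (by simp only [huz x (fun h => hxn (subset_closure h)), G0])
    · intro w hw hwc hw1
      have : TV (fun x => F (u x)) ≤ TV u - ∫ x, G (u x) * div2 w x := by
        refine csSup_le ⟨_, 0, zc, zs, by simp, rfl⟩ ?_
        rintro _ ⟨z, hz, hzc, hz1, rfl⟩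
        linarith [split z w hz hzc hz1 hw hwc hw1]
      linarith
  filter_upwards [hz0] with x hx
  by_contra hgt
  push Not at hgt
  have e1 := hst_pos (sub_pos.2 hgt)
  have e2 : hst (-u x) = 0 := hst_nonpos (by linarith)
  simp only [hGdef, e2] at hx
  nlinarith

end
end

section
/- For an annulus A = B_R(0) \ \overline{B_ρ(0)} ⊆ ℝ² with 0 < ρ < R, the full annulus A is a Cheeger set of itself; in particular, for every measurable E ⊆ A with |E| > 0, Per(E)/|E| ≥ Per(A)/|A| = (2πR + 2πρ)/(π(R² − ρ²)) = 2/(R − ρ). -/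
open MeasureTheory Real Set Filter

noncomputable section

lemma div2_w (c k : ℝ) (x : E2) (hx : x ≠ 0) :
    DifferentiableAt ℝ (fun y : E2 => (c * (1 - k * (‖y‖ ^ 2)⁻¹)) • y) x ∧
    div2 (fun y : E2 => (c * (1 - k * (‖y‖ ^ 2)⁻¹)) • y) x = 2 * c := by
  have hn : ‖x‖ ^ 2 ≠ 0 := by simpa using hx
  have h1 : HasFDerivAt (fun y : E2 => ‖y‖ ^ 2) (2 • (innerSL ℝ x)) x := by
    simpa using (hasStrictFDerivAt_norm_sq x).hasFDerivAt
  have h2 := (((hasDerivAt_inv hn).comp_hasFDerivAt x h1).const_mul k).const_sub 1 |>.const_mul c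
  have h3 := h2.smul (hasFDerivAt_id x)
  refine ⟨h3.differentiableAt, ?_⟩
  have h4 : fderiv ℝ (fun y : E2 => (c * (1 - k * (‖y‖ ^ 2)⁻¹)) • y) x = _ := h3.fderiv
  unfold div2
  rw [h4]
  have h5 : ‖x‖ ^ 2 = x 0 ^ 2 + x 1 ^ 2 := by
    rw [EuclideanSpace.norm_sq_eq]; simp
  simp [Fin.sum_univ_two, EuclideanSpace.inner_single_right]
  rw [h5] at hn ⊢
  field_simp
  ring

lemma norm_w (ρ R : ℝ) (hρ : 0 < ρ) (hρR : ρ < R) (x : E2) (h1 : ρ ≤ ‖x‖) (h2 : ‖x‖ ≤ R) :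
    ‖((R - ρ)⁻¹ * (1 - (R * ρ) * (‖x‖ ^ 2)⁻¹)) • x‖ ≤ 1 := by
  have hp : 0 < ‖x‖ := by linarith
  rw [norm_smul, Real.norm_eq_abs]
  have : |(R - ρ)⁻¹ * (1 - (R * ρ) * (‖x‖ ^ 2)⁻¹)| * ‖x‖
      = |(R - ρ)⁻¹ * (1 - (R * ρ) * (‖x‖ ^ 2)⁻¹) * ‖x‖| := by
    rw [abs_mul _ ‖x‖, abs_norm]
  rw [this]
  generalize ‖x‖ = s at *
  have hd : 0 < R - ρ := by linarith
  have e : (R - ρ)⁻¹ * (1 - (R * ρ) * (s ^ 2)⁻¹) * s = (s ^ 2 - R * ρ) / ((R - ρ) * s) := by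
    field_simp
  rw [e, abs_le, le_div_iff₀ (by positivity), div_le_iff₀ (by positivity)]
  constructor
  · nlinarith [mul_nonneg (sub_nonneg.2 h1) (by linarith : 0 ≤ s + R)]
  · nlinarith [mul_nonneg (sub_nonneg.2 h2) (by linarith : 0 ≤ s + ρ)]

lemma low_aux (ρ R : ℝ) (hρ : 0 < ρ) (hρR : ρ < R) (E : Set E2) (hE : MeasurableSet E)
    (hF : FinPer E) (hsub : E ⊆ Metric.ball (0:E2) R \ Metric.closedBall (0:E2) ρ)
    (t : ℝ) (ht0 : 0 < t) (ht : t < 1) :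
    t * (2 / (R - ρ)) * volR E ≤ Per E := by
  set w : E2 → E2 := fun y => ((R - ρ)⁻¹ * (1 - (R * ρ) * (‖y‖ ^ 2)⁻¹)) • y with hw
  set K : Set E2 := Metric.closedBall 0 R \ Metric.ball 0 ρ with hK
  have hKc : IsCompact K := (isCompact_closedBall _ _).diff Metric.isOpen_ball
  have hwc : ∀ x ≠ 0, ContDiffAt ℝ (⊤ : ℕ∞) w x := by
    intro x hx
    have hn : ‖x‖ ^ 2 ≠ 0 := by simpa using hx
    have := (contDiff_norm_sq ℝ (n := (⊤ : ℕ∞)) (E := E2)).contDiffAt (x := x)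
    exact (contDiffAt_const.mul (contDiffAt_const.sub (contDiffAt_const.mul (this.inv hn)))).smul
      contDiffAt_id
  set U : Set E2 := {x | x ≠ 0 ∧ t * ‖w x‖ < 1} with hU
  have hUo : IsOpen U := by
    have : ContinuousOn (fun x => t * ‖w x‖) {x | x ≠ 0} := fun x hx =>
      (((hwc x hx).continuousAt.norm).const_mul t).continuousWithinAt
    exact this.isOpen_inter_preimage isOpen_ne (isOpen_Iio (a := (1:ℝ)))
  have hKU : K ⊆ U := by
    intro x hx
    have h1 : ρ ≤ ‖x‖ := by simpa [hK] using hx.2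
    have h2 : ‖x‖ ≤ R := by simpa [hK] using hx.1
    refine ⟨?_, ?_⟩
    · rintro rfl
      simp at h1; linarith
    · have := norm_w ρ R hρ hρR x h1 h2
      change ‖w x‖ ≤ 1 at this
      nlinarith [norm_nonneg (w x)]
  obtain ⟨L, hLc, hKL, hLU⟩ := exists_compact_between hKc hUo hKU
  obtain ⟨χ, hχs, hχr, hχsup, hχ1⟩ := exists_contMDiff_support_eq_eq_one_iff
    (modelWithCornersSelf ℝ E2) (n := (⊤ : ℕ∞)) isOpen_interior hKc.isClosed hKL
  have hχd : ContDiff ℝ (⊤ : ℕ∞) χ := hχs.contDiff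
  have hts : tsupport χ ⊆ L := by
    rw [tsupport, hχsup]
    exact closure_minimal interior_subset hLc.isClosed
  set z : E2 → E2 := fun x => (t * χ x) • w x with hz
  have hzs : Function.support z ⊆ L := by
    intro x hx
    apply interior_subset
    rw [← hχsup]
    intro h
    exact hx (by simp [hz, h])
  have hmem : (∫ x, E.indicator 1 x * div2 z x) ∈ tvSet (E.indicator 1) := by
    refine ⟨z, ?_, HasCompactSupport.of_support_subset_isCompact hLc hzs, ?_, rfl⟩
    · rw [contDiff_iff_contDiffAt]
      intro x
      by_cases hx : x ∈ L
      · exact (contDiffAt_const.mul hχd.contDiffAt).smul (hwc x (hLU hx).1)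
      · have : z =ᶠ[nhds x] fun _ => 0 := by
          filter_upwards [hLc.isClosed.isOpen_compl.mem_nhds hx] with y hy
          by_contra h
          exact hy (hzs h)
        exact contDiffAt_const.congr_of_eventuallyEq this
    · intro x
      by_cases hx : x ∈ L
      · have h1 := (hLU hx).2
        have h2 : 0 ≤ χ x ∧ χ x ≤ 1 := hχr ⟨x, rfl⟩
        simp only [hz, norm_smul, Real.norm_eq_abs, abs_mul, abs_of_pos ht0, abs_of_nonneg h2.1]
        calc t * χ x * ‖w x‖ = χ x * (t * ‖w x‖) := by ring
          _ ≤ 1 * 1 := mul_le_mul h2.2 h1.le (by positivity) zero_le_one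
          _ = 1 := one_mul 1
      · have : z x = 0 := by
          by_contra h
          exact hx (hzs h)
        simp [this]
  have hdiv : ∀ x ∈ E, div2 z x = t * (2 / (R - ρ)) := by
    intro x hx
    have hA := hsub hx
    have hx0 : x ≠ 0 := by
      rintro rfl
      exact hA.2 (by simp [hρ.le])
    have ho : IsOpen (Metric.ball (0:E2) R \ Metric.closedBall (0:E2) ρ) :=
      Metric.isOpen_ball.sdiff Metric.isClosed_closedBall
    have heq : z =ᶠ[nhds x] fun y => (t * (R - ρ)⁻¹ * (1 - (R * ρ) * (‖y‖ ^ 2)⁻¹)) • y := by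
      filter_upwards [ho.mem_nhds hA] with y hy
      have : χ y = 1 := (hχ1 y).1
        ⟨Metric.ball_subset_closedBall hy.1, fun h => hy.2 (Metric.ball_subset_closedBall h)⟩
      simp [hz, hw, this, smul_smul, mul_assoc]
    have h := (div2_w (t * (R - ρ)⁻¹) (R * ρ) x hx0).2
    unfold div2 at h ⊢
    rw [heq.fderiv_eq, h]
    ring
  have hint : (∫ x, E.indicator 1 x * div2 z x) = t * (2 / (R - ρ)) * volR E := by
    have : (fun x => E.indicator 1 x * div2 z x) = E.indicator (fun _ => t * (2 / (R - ρ))) := by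
      ext x
      by_cases hx : x ∈ E
      · simp [hx, hdiv x hx]
      · simp [hx]
    rw [this, integral_indicator_const _ hE]
    simp [volR, Measure.real, mul_comm]
  rw [← hint]
  exact le_csSup hF hmem

lemma low (ρ R : ℝ) (hρ : 0 < ρ) (hρR : ρ < R) (E : Set E2) (hE : MeasurableSet E)
    (hF : FinPer E) (hsub : E ⊆ Metric.ball (0:E2) R \ Metric.closedBall (0:E2) ρ) :
    (2 / (R - ρ)) * volR E ≤ Per E := by
  have hT : Tendsto (fun t : ℝ => t * (2 / (R - ρ)) * volR E) (nhdsWithin 1 (Iio 1))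
      (nhds (1 * (2 / (R - ρ)) * volR E)) := by
    apply Tendsto.mono_left _ nhdsWithin_le_nhds
    exact Continuous.tendsto (by fun_prop) 1
  rw [one_mul] at hT
  refine le_of_tendsto hT ?_
  filter_upwards [Ioo_mem_nhdsLT (zero_lt_one' ℝ)] with t ht
  exact low_aux ρ R hρ hρR E hE hF hsub t ht.1 ht.2

lemma hasDerivAt_euclidean {f : ℝ → E2} {f' : E2} {x : ℝ} :
    HasDerivAt f f' x ↔ ∀ i, HasDerivAt (fun y => f y i) (f' i) x := by
  simp only [hasDerivAt_iff_hasFDerivAt, ← hasFDerivWithinAt_univ]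
  rw [hasFDerivWithinAt_euclidean]
  refine forall_congr' fun i => ?_
  have : (PiLp.proj 2 (fun _ : Fin 2 => ℝ) i).comp (ContinuousLinearMap.toSpanSingleton ℝ f')
      = ContinuousLinearMap.toSpanSingleton ℝ (f' i) := by
    ext; simp
  rw [this]

def PP (p : ℝ × ℝ) : E2 := !₂[p.1 * Real.cos p.2, p.1 * Real.sin p.2]

lemma PP_contDiff : ContDiff ℝ (⊤ : ℕ∞) PP := by
  rw [contDiff_euclidean]
  intro i
  fin_cases i
  · simp [PP]; fun_prop
  · simp [PP]; fun_prop

lemma PP_norm (p : ℝ × ℝ) : ‖PP p‖ = |p.1| := by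
  rw [← sq_eq_sq₀ (norm_nonneg _) (abs_nonneg _), EuclideanSpace.norm_sq_eq, sq_abs]
  simp [PP, Fin.sum_univ_two, mul_pow]
  rw [← mul_add]; simp

lemma PP_r (r θ : ℝ) : HasDerivAt (fun s => PP (s, θ))
    (Real.cos θ • EuclideanSpace.single 0 1 + Real.sin θ • EuclideanSpace.single 1 1 : E2) r := by
  rw [hasDerivAt_euclidean]
  intro i
  fin_cases i
  · simpa [PP] using (hasDerivAt_id r).mul_const (Real.cos θ)
  · simpa [PP] using (hasDerivAt_id r).mul_const (Real.sin θ)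

lemma PP_t (r θ : ℝ) : HasDerivAt (fun s => PP (r, s))
    ((-(r * Real.sin θ)) • EuclideanSpace.single 0 1
      + (r * Real.cos θ) • EuclideanSpace.single 1 1 : E2) θ := by
  rw [hasDerivAt_euclidean]
  intro i
  fin_cases i
  · simpa [PP] using (Real.hasDerivAt_cos θ).const_mul r
  · simpa [PP] using (Real.hasDerivAt_sin θ).const_mul r

def FF (z : E2 → E2) (p : ℝ × ℝ) : ℝ :=
  p.1 * (z (PP p) 0 * Real.cos p.2 + z (PP p) 1 * Real.sin p.2)
def GG (z : E2 → E2) (p : ℝ × ℝ) : ℝ :=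
  z (PP p) 1 * Real.cos p.2 - z (PP p) 0 * Real.sin p.2

lemma comp_contDiff (z : E2 → E2) (hz : ContDiff ℝ (⊤ : ℕ∞) z) (i : Fin 2) :
    ContDiff ℝ (⊤ : ℕ∞) (fun p => z (PP p) i) :=
  contDiff_euclidean.1 (hz.comp PP_contDiff) i

lemma FF_contDiff (z : E2 → E2) (hz : ContDiff ℝ (⊤ : ℕ∞) z) : ContDiff ℝ (⊤ : ℕ∞) (FF z) := by
  have h0 := comp_contDiff z hz 0
  have h1 := comp_contDiff z hz 1
  unfold FF
  fun_prop

lemma GG_contDiff (z : E2 → E2) (hz : ContDiff ℝ (⊤ : ℕ∞) z) : ContDiff ℝ (⊤ : ℕ∞) (GG z) := by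
  have h0 := comp_contDiff z hz 0
  have h1 := comp_contDiff z hz 1
  unfold GG
  fun_prop

lemma polar_div (z : E2 → E2) (hz : ContDiff ℝ (⊤ : ℕ∞) z) (p : ℝ × ℝ) :
    fderiv ℝ (FF z) p (1, 0) + fderiv ℝ (GG z) p (0, 1) = p.1 * div2 z (PP p) := by
  obtain ⟨r, θ⟩ := p
  have hFd : HasFDerivAt (FF z) (fderiv ℝ (FF z) (r, θ)) (r, θ) :=
    ((FF_contDiff z hz).differentiable (by simp) _).hasFDerivAt
  have hGd : HasFDerivAt (GG z) (fderiv ℝ (GG z) (r, θ)) (r, θ) :=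
    ((GG_contDiff z hz).differentiable (by simp) _).hasFDerivAt
  have hzd : HasFDerivAt z (fderiv ℝ z (PP (r, θ))) (PP (r, θ)) :=
    (hz.differentiable (by simp) _).hasFDerivAt
  have hl1 : HasDerivAt (fun s : ℝ => (s, θ)) ((1:ℝ), (0:ℝ)) r :=
    (hasDerivAt_id r).prodMk (hasDerivAt_const r θ)
  have hl2 : HasDerivAt (fun s : ℝ => (r, s)) ((0:ℝ), (1:ℝ)) θ :=
    (hasDerivAt_const θ r).prodMk (hasDerivAt_id θ)
  have a1 := hFd.comp_hasDerivAt r hl1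
  have a2 := hGd.comp_hasDerivAt θ hl2
  have zr := hasDerivAt_euclidean.1 (hzd.comp_hasDerivAt r (PP_r r θ))
  have zt := hasDerivAt_euclidean.1 (hzd.comp_hasDerivAt θ (PP_t r θ))
  have b1 := (hasDerivAt_id r).mul (((zr 0).mul_const (Real.cos θ)).add
    ((zr 1).mul_const (Real.sin θ)))
  have b2 := ((zt 1).mul (Real.hasDerivAt_cos θ)).sub ((zt 0).mul (Real.hasDerivAt_sin θ))
  have e1 := a1.unique b1
  have e2 := a2.unique b2
  rw [e1, e2]
  simp only [div2, Fin.sum_univ_two, map_add, map_smul, PiLp.add_apply, PiLp.smul_apply,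
    smul_eq_mul, Function.comp, id, Pi.add_apply]
  have := Real.sin_sq_add_cos_sq θ
  have h2 : Real.sin θ ^ 2 = 1 - Real.cos θ ^ 2 := by linarith
  ring_nf
  simp only [h2]
  ring

lemma integral_polar (g : E2 → ℝ) :
    ∫ x, g x = ∫ p in Ioi (0 : ℝ) ×ˢ Ioo (-π) π, p.1 * g (PP p) := by
  have h := Complex.orthonormalBasisOneI.repr.measurePreserving.integral_comp
    Complex.orthonormalBasisOneI.repr.toHomeomorph.measurableEmbedding g
  rw [← h, ← Complex.integral_comp_polarCoord_symm]
  refine setIntegral_congr_fun (measurableSet_Ioi.prod measurableSet_Ioo) fun p _ => ?_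
  have : Complex.orthonormalBasisOneI.repr (Complex.polarCoord.symm p) = PP p := by
    ext i
    fin_cases i <;> simp [PP, ← Complex.ofReal_cos, ← Complex.ofReal_sin, -Complex.ofReal_cos, -Complex.ofReal_sin]
  simp only [this, smul_eq_mul]

lemma rad_le (z : E2 → E2) (hz : ∀ x, ‖z x‖ ≤ 1) (x : E2) (θ : ℝ) :
    |z x 0 * Real.cos θ + z x 1 * Real.sin θ| ≤ 1 := by
  have h1 : ‖z x‖ ^ 2 = z x 0 ^ 2 + z x 1 ^ 2 := by
    rw [EuclideanSpace.norm_sq_eq]; simp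
  have h2 : ‖z x‖ ^ 2 ≤ 1 := pow_le_one₀ (norm_nonneg _) (hz x)
  have := Real.sin_sq_add_cos_sq θ
  rw [← sq_le_one_iff_abs_le_one]
  nlinarith [sq_nonneg (z x 0 * Real.sin θ - z x 1 * Real.cos θ)]

lemma up (ρ R : ℝ) (hρ : 0 < ρ) (hρR : ρ < R) (z : E2 → E2) (hz : ContDiff ℝ (⊤ : ℕ∞) z)
    (hb : ∀ x, ‖z x‖ ≤ 1) :
    ∫ x, (Metric.ball (0:E2) R \ Metric.closedBall (0:E2) ρ).indicator 1 x * div2 z x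
      ≤ 2 * π * (R + ρ) := by
  have hπ := Real.pi_pos
  have hFc := FF_contDiff z hz
  have hGc := GG_contDiff z hz
  have key : ∫ x, (Metric.ball (0:E2) R \ Metric.closedBall (0:E2) ρ).indicator 1 x * div2 z x
      = ∫ p in Icc (ρ, -π) (R, π), fderiv ℝ (FF z) p (1, 0) + fderiv ℝ (GG z) p (0, 1) := by
    rw [integral_polar]
    have e : ∫ p in Ioi (0 : ℝ) ×ˢ Ioo (-π) π, p.1 *
        ((Metric.ball (0:E2) R \ Metric.closedBall (0:E2) ρ).indicator 1 (PP p) * div2 z (PP p))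
        = ∫ p in Ioi (0 : ℝ) ×ˢ Ioo (-π) π, (Ioo ρ R ×ˢ Ioo (-π) π).indicator
          (fun p => fderiv ℝ (FF z) p (1, 0) + fderiv ℝ (GG z) p (0, 1)) p := by
      refine setIntegral_congr_fun (measurableSet_Ioi.prod measurableSet_Ioo) fun p hp => ?_
      have hp1 : 0 < p.1 := hp.1
      have hp2 : p.2 ∈ Ioo (-π) π := hp.2
      have hiff : PP p ∈ Metric.ball (0:E2) R \ Metric.closedBall (0:E2) ρ ↔
          p ∈ Ioo ρ R ×ˢ Ioo (-π) π := by
        simp only [Set.mem_sdiff, mem_ball_zero_iff, mem_closedBall_zero_iff, PP_norm, abs_of_pos hp1,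
          mem_prod, hp2, and_true, mem_Ioo, not_le]
        exact and_comm
      beta_reduce
      by_cases h : p ∈ Ioo ρ R ×ˢ Ioo (-π) π
      · rw [indicator_of_mem h, indicator_of_mem (hiff.2 h), polar_div z hz]
        simp
      · rw [indicator_of_notMem h, indicator_of_notMem (fun h' => h (hiff.1 h'))]
        simp
    rw [e, setIntegral_indicator (measurableSet_Ioo.prod measurableSet_Ioo)]
    have : (Ioi (0 : ℝ) ×ˢ Ioo (-π) π) ∩ (Ioo ρ R ×ˢ Ioo (-π) π) = Ioo ρ R ×ˢ Ioo (-π) π := by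
      apply inter_eq_right.2
      exact prod_mono (fun x hx => hρ.trans hx.1) subset_rfl
    rw [this]
    apply setIntegral_congr_set
    rw [Icc_prod_eq]
    exact Measure.set_prod_ae_eq Ioo_ae_eq_Icc Ioo_ae_eq_Icc
  rw [key, integral_divergence_prod_Icc_of_hasFDerivAt_of_le (FF z) (GG z) (fderiv ℝ (FF z))
    (fderiv ℝ (GG z)) (ρ, -π) (R, π) ⟨hρR.le, by simp; linarith⟩ hFc.continuous.continuousOn
    hGc.continuous.continuousOn
    (fun x _ => (hFc.differentiable (by simp) x).hasFDerivAt)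
    (fun x _ => (hGc.differentiable (by simp) x).hasFDerivAt)
    (((hFc.continuous_fderiv (by simp)).clm_apply continuous_const).add
      ((hGc.continuous_fderiv (by simp)).clm_apply continuous_const)
      |>.continuousOn.integrableOn_compact isCompact_Icc)]
  have hper : ∀ x, GG z (x, π) = GG z (x, -π) := by
    intro x
    simp [GG, PP]
  simp only [hper, sub_self, zero_add]
  have bd : ∀ r, 0 < r → |∫ y in (-π)..π, FF z (r, y)| ≤ 2 * π * r := by
    intro r hr
    have := intervalIntegral.norm_integral_le_of_norm_le_const (a := -π) (b := π) (C := r)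
      (f := fun y => FF z (r, y)) (fun y _ => by
        simp only [FF, Real.norm_eq_abs, abs_mul, abs_of_pos hr]
        nlinarith [rad_le z hb (PP (r, y)) y])
    rw [Real.norm_eq_abs] at this
    refine this.trans (le_of_eq ?_)
    rw [abs_of_pos (by linarith)]
    ring
  have := (abs_le.1 (bd R (by linarith))).2
  have := (abs_le.1 (bd ρ hρ)).1
  linarith

lemma vol_annulus (ρ R : ℝ) (hρ : 0 < ρ) (hρR : ρ < R) :
    volR (Metric.ball (0:E2) R \ Metric.closedBall (0:E2) ρ) = π * (R ^ 2 - ρ ^ 2) := by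
  unfold volR
  rw [measure_sdiff (Metric.closedBall_subset_ball hρR)
    Metric.isClosed_closedBall.measurableSet.nullMeasurableSet
    (isCompact_closedBall _ _).measure_lt_top.ne,
    ENNReal.toReal_sub_of_le (measure_mono (Metric.closedBall_subset_ball hρR))
      Metric.isBounded_ball.measure_lt_top.ne,
    EuclideanSpace.volume_ball_fin_two, EuclideanSpace.volume_closedBall_fin_two]
  simp [ENNReal.toReal_ofReal, Real.pi_pos.le, hρ.le, (hρ.trans hρR).le]
  ring

/-- an annulus is a Cheeger set of itself. -/
theorem stmt15 (ρ R : ℝ) (hρ : 0 < ρ) (hρR : ρ < R) :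
    (∀ Eset : Set E2, MeasurableSet Eset → FinPer Eset →
      Eset ⊆ Metric.ball (0:E2) R \ Metric.closedBall (0:E2) ρ → 0 < volR Eset →
      Per (Metric.ball (0:E2) R \ Metric.closedBall (0:E2) ρ) /
          volR (Metric.ball (0:E2) R \ Metric.closedBall (0:E2) ρ)
        ≤ Per Eset / volR Eset) ∧
    Per (Metric.ball (0:E2) R \ Metric.closedBall (0:E2) ρ) /
        volR (Metric.ball (0:E2) R \ Metric.closedBall (0:E2) ρ) = 2 / (R - ρ) ∧
    (2 * π * R + 2 * π * ρ) / (π * (R ^ 2 - ρ ^ 2)) = 2 / (R - ρ) := by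
  have hd : 0 < R - ρ := by linarith
  have hπ := Real.pi_pos
  have hv := vol_annulus ρ R hρ hρR
  have hsq : 0 < R ^ 2 - ρ ^ 2 := by nlinarith
  have hle : ∀ y ∈ tvSet ((Metric.ball (0:E2) R \ Metric.closedBall (0:E2) ρ).indicator 1),
      y ≤ 2 * π * (R + ρ) := by
    rintro y ⟨z, hz, -, hb, rfl⟩
    exact up ρ R hρ hρR z hz hb
  have hfin : FinPer (Metric.ball (0:E2) R \ Metric.closedBall (0:E2) ρ) := ⟨_, hle⟩
  have hne : (tvSet ((Metric.ball (0:E2) R \ Metric.closedBall (0:E2) ρ).indicator 1)).Nonempty :=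
    ⟨_, fun _ => 0, contDiff_const, HasCompactSupport.zero, by simp, rfl⟩
  have hup : Per (Metric.ball (0:E2) R \ Metric.closedBall (0:E2) ρ) ≤ 2 * π * (R + ρ) :=
    csSup_le hne hle
  have hlo := low ρ R hρ hρR _ (Metric.isOpen_ball.sdiff Metric.isClosed_closedBall).measurableSet
    hfin subset_rfl
  have h3 : (2 * π * R + 2 * π * ρ) / (π * (R ^ 2 - ρ ^ 2)) = 2 / (R - ρ) := by
    rw [div_eq_div_iff (by positivity) hd.ne']
    ring
  have h2 : Per (Metric.ball (0:E2) R \ Metric.closedBall (0:E2) ρ) /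
        volR (Metric.ball (0:E2) R \ Metric.closedBall (0:E2) ρ) = 2 / (R - ρ) := by
    apply le_antisymm
    · rw [← h3, hv]
      gcongr
      linarith
    · rw [le_div_iff₀ (by rw [hv]; positivity)]
      exact hlo
  refine ⟨?_, h2, h3⟩
  intro E hE hF hsub hpos
  rw [h2, le_div_iff₀ hpos]
  exact low ρ R hρ hρR E hE hF hsub

end
end
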